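/- Let m > n ≥ 2 be integers and let φ : ℝᵐ → ℝⁿ be a non-constant map whose component functions are polynomials, and which is a biharmonic morphism: for every open set U ⊆ ℝⁿ and every smooth biharmonic function f : U → ℝ, the pull-back f ∘ φ : φ⁻¹(U) → ℝ is biharmonic. Then φ is an orthogonal projection followed by a homothety: there exist a real number λ > 0, a vector b ∈ ℝⁿ, and a linear map A : ℝᵐ → ℝⁿ whose composition with its adjoint is the identity of ℝⁿ (A ∘ A* = id, i.e. A is a co-isometry, an orthogonal projection up to identification), such that φ(x) = λ·A(x) + b for all x ∈ ℝᵐ. -/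

import Mathlib

/-- The Euclidean Laplacian `Δf = Σᵢ ∂²f/∂xᵢ²` of a function on `ℝᵐ`. -/
noncomputable def laplacian {m : ℕ} (f : EuclideanSpace ℝ (Fin m) → ℝ)
    (x : EuclideanSpace ℝ (Fin m)) : ℝ :=
  ∑ i : Fin m, fderiv ℝ (fun y => fderiv ℝ f y (EuclideanSpace.single i 1)) x
      (EuclideanSpace.single i 1)

namespace MvPolynomial

variable {σ : Type*}

theorem pderiv_comm {R : Type*} [CommSemiring R] (i j : σ) (p : MvPolynomial σ R) :
    pderiv i (pderiv j p) = pderiv j (pderiv i p) := by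
  classical
  induction p using MvPolynomial.induction_on with
  | C a => simp
  | add p q hp hq => simp [hp, hq]
  | mul_X p k hp =>
    simp only [pderiv_mul, pderiv_X, map_add, hp, Pi.single_apply, apply_ite (pderiv _),
      pderiv_one, map_zero, ite_self]
    ring

/-- All partial derivatives of order `k` of `p` vanish; over `ℝ` this says that `p` has degree
less than `k`. -/
def DegreeBelow : ℕ → MvPolynomial σ ℝ → Prop
  | 0, p => p = 0
  | k + 1, p => ∀ i, DegreeBelow k (pderiv i p)

theorem DegreeBelow.zero (k : ℕ) : DegreeBelow k (0 : MvPolynomial σ ℝ) := by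
  induction k with
  | zero => rfl
  | succ k ih => intro i; simpa using ih

theorem DegreeBelow.add {k : ℕ} {p q : MvPolynomial σ ℝ} (hp : DegreeBelow k p)
    (hq : DegreeBelow k q) : DegreeBelow k (p + q) := by
  induction k generalizing p q with
  | zero => simp_all [DegreeBelow]
  | succ k ih => intro i; rw [map_add]; exact ih (hp i) (hq i)

theorem DegreeBelow.sum {ι : Type*} {k : ℕ} {s : Finset ι} {p : ι → MvPolynomial σ ℝ}
    (hp : ∀ i ∈ s, DegreeBelow k (p i)) : DegreeBelow k (∑ i ∈ s, p i) :=
  Finset.sum_induction p (DegreeBelow k) (fun _ _ => DegreeBelow.add) (.zero k) hp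

theorem degreeBelow_of_coeff_eq_zero {k : ℕ} {p : MvPolynomial σ ℝ}
    (hp : ∀ s : σ →₀ ℕ, k ≤ s.degree → coeff s p = 0) : DegreeBelow k p := by
  induction k generalizing p with
  | zero => exact MvPolynomial.ext _ _ fun s => by simpa using hp s (Nat.zero_le _)
  | succ k ih =>
    refine fun i => ih fun s hs => ?_
    rw [coeff_pderiv, hp _ (by simpa [map_add] using hs), zero_mul]

theorem exists_degreeBelow (p : MvPolynomial σ ℝ) : ∃ k, DegreeBelow k p := by
  refine ⟨p.totalDegree + 1, degreeBelow_of_coeff_eq_zero fun s hs => ?_⟩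
  exact coeff_eq_zero_of_totalDegree_lt hs

theorem eq_C_of_pderiv_eq_zero {p : MvPolynomial σ ℝ} (hp : ∀ i, pderiv i p = 0) :
    p = C (coeff 0 p) := by
  classical
  refine MvPolynomial.ext _ _ fun s => ?_
  rw [coeff_C]
  split_ifs with h
  · rw [← h]
  · obtain ⟨i, hi⟩ : ∃ i, s i ≠ 0 := by
      by_contra! hs
      exact h (Finsupp.ext fun i => (hs i).symm)
    have hc := coeff_pderiv (i := i) p (s - Finsupp.single i 1)
    rw [Finsupp.sub_add_single_one_cancel hi, hp i, coeff_zero] at hc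
    exact (mul_eq_zero.mp hc.symm).resolve_right (by positivity)

variable [Fintype σ]

theorem DegreeBelow.exists_affine {p : MvPolynomial σ ℝ} (hp : DegreeBelow 2 p) :
    ∃ (a : σ → ℝ) (b : ℝ), p = ∑ i, C (a i) * X i + C b := by
  classical
  have ha i : pderiv i p = C (coeff 0 (pderiv i p)) := eq_C_of_pderiv_eq_zero (hp i)
  set a : σ → ℝ := fun i => coeff 0 (pderiv i p)
  have h : ∀ i, pderiv i (p - ∑ j, C (a j) * X j) = 0 := fun i => by
    rw [map_sub, map_sum]
    simp only [pderiv_C_mul, pderiv_X, Pi.single_apply, mul_ite, mul_one, mul_zero,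
      Finset.sum_ite_eq', Finset.mem_univ, if_true]
    rw [sub_eq_zero]
    exact ha i
  refine ⟨a, coeff 0 (p - ∑ j, C (a j) * X j), ?_⟩
  rw [← eq_C_of_pderiv_eq_zero h]
  ring

/-- The Laplacian on polynomials. -/
noncomputable def lapl : MvPolynomial σ ℝ →ₗ[ℝ] MvPolynomial σ ℝ :=
  ∑ i, (pderiv i).toLinearMap ∘ₗ (pderiv i).toLinearMap

theorem lapl_apply (p : MvPolynomial σ ℝ) : lapl p = ∑ i, pderiv i (pderiv i p) := by
  simp [lapl]

theorem lapl_mul (p q : MvPolynomial σ ℝ) :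
    lapl (p * q) = lapl p * q + p * lapl q + (2 : ℝ) • ∑ i, pderiv i p * pderiv i q := by
  simp only [lapl_apply, pderiv_mul, map_add, Finset.sum_mul, Finset.mul_sum, Finset.smul_sum,
    ← Finset.sum_add_distrib, two_smul]
  exact Finset.sum_congr rfl fun i _ => by ring

theorem pderiv_lapl (i : σ) (p : MvPolynomial σ ℝ) :
    pderiv i (lapl p) = lapl (pderiv i p) := by
  simp only [lapl_apply, map_sum]
  exact Finset.sum_congr rfl fun j _ => by rw [pderiv_comm i j, pderiv_comm i j]

theorem pderiv_lapl_pow (i : σ) (k : ℕ) (p : MvPolynomial σ ℝ) :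
    pderiv i ((lapl ^ k) p) = (lapl ^ k) (pderiv i p) := by
  induction k generalizing p with
  | zero => rfl
  | succ k ih => rw [pow_succ, Module.End.mul_apply, ih, pderiv_lapl, Module.End.mul_apply]

theorem DegreeBelow.lapl {k : ℕ} {p : MvPolynomial σ ℝ} (hp : DegreeBelow (k + 2) p) :
    DegreeBelow k (lapl p) := by
  rw [lapl_apply]
  exact .sum fun i _ => hp i i

theorem DegreeBelow.lapl_pow_eq_zero {k : ℕ} {p : MvPolynomial σ ℝ} (hp : DegreeBelow k p) :
    (MvPolynomial.lapl ^ k) p = 0 := by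
  induction k using Nat.strong_induction_on generalizing p with
  | _ k ih =>
    match k, hp with
    | 0, hp => simpa [DegreeBelow] using hp
    | 1, hp => simp [lapl_apply, show ∀ i, pderiv i p = 0 from hp]
    | k + 2, hp =>
      rw [pow_succ, Module.End.mul_apply, pow_succ', Module.End.mul_apply,
        ih k (by omega) hp.lapl, map_zero]

theorem DegreeBelow.lapl_pow_succ_eq_zero {k : ℕ} {p : MvPolynomial σ ℝ}
    (hp : DegreeBelow (k + 2) p) : (MvPolynomial.lapl ^ (k + 1)) p = 0 := by
  rw [pow_succ, Module.End.mul_apply, hp.lapl.lapl_pow_eq_zero]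

/-- Positivity of the pairing `p, q ↦ Δ ^ k (p * q)` between a polynomial of degree at most `k + j`
and its `j`-th iterated Laplacian. -/
theorem DegreeBelow.eval_lapl_pow_mul_nonneg {k j : ℕ} {p : MvPolynomial σ ℝ}
    (hp : DegreeBelow (k + j + 1) p) :
    0 ≤ eval 0 ((MvPolynomial.lapl ^ k) (p * (MvPolynomial.lapl ^ j) p)) := by
  induction k generalizing j p with
  | zero =>
    cases j with
    | zero => simpa using mul_self_nonneg _
    | succ j =>
      rw [DegreeBelow.lapl_pow_succ_eq_zero (p := p) (k := j) (by convert hp using 1; omega)]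
      simp
  | succ k ih =>
    rw [pow_succ, Module.End.mul_apply, lapl_mul]
    simp only [map_add, map_smul, map_sum, smul_eval, ← Module.End.mul_apply, ← pow_succ']
    refine add_nonneg (add_nonneg ?_ ?_) (mul_nonneg zero_le_two (Finset.sum_nonneg fun i _ => ?_))
    · cases j with
      | zero =>
        rw [mul_comm]
        simpa using ih (j := 1) (p := p) (by convert hp using 1)
      | succ j =>
        rw [pow_succ, Module.End.mul_apply]
        exact ih (DegreeBelow.lapl (by convert hp using 1; omega))
    · exact ih (by convert hp using 1; omega)
    · rw [pderiv_lapl_pow]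
      exact ih (j := j) ((show DegreeBelow ((k + j + 1) + 1) p by convert hp using 1; omega) i)

theorem DegreeBelow.of_eval_lapl_pow_mul_self_eq_zero {k : ℕ} {p : MvPolynomial σ ℝ}
    (hp : DegreeBelow (k + 1) p) (h : eval 0 ((MvPolynomial.lapl ^ k) (p * p)) = 0) :
    DegreeBelow k p := by
  induction k generalizing p with
  | zero =>
    rw [eq_C_of_pderiv_eq_zero (p := p) hp] at h ⊢
    simpa [DegreeBelow] using h
  | succ k ih =>
    rw [pow_succ, Module.End.mul_apply, lapl_mul] at h
    simp only [map_add, map_smul, map_sum, smul_eval, mul_comm (MvPolynomial.lapl p) p] at h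
    have h₁ : 0 ≤ eval 0 ((MvPolynomial.lapl ^ k) (p * MvPolynomial.lapl p)) := by
      simpa using DegreeBelow.eval_lapl_pow_mul_nonneg (j := 1) hp
    have h₂ : ∀ i ∈ Finset.univ,
        0 ≤ eval 0 ((MvPolynomial.lapl ^ k) (pderiv i p * pderiv i p)) := fun i _ => by
      simpa using DegreeBelow.eval_lapl_pow_mul_nonneg (j := 0) (hp i)
    have h₃ := Finset.sum_nonneg h₂
    have h₄ : ∑ i, eval 0 ((MvPolynomial.lapl ^ k) (pderiv i p * pderiv i p)) = 0 := by linarith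
    exact fun i => ih (hp i) ((Finset.sum_eq_zero_iff_of_nonneg h₂).mp h₄ i (Finset.mem_univ i))

/-- A polynomial whose square is biharmonic has degree at most one. -/
theorem degreeBelow_two_of_lapl_lapl_mul_self_eq_zero {p : MvPolynomial σ ℝ}
    (h : lapl (lapl (p * p)) = 0) : DegreeBelow 2 p := by
  obtain ⟨k, hk⟩ := exists_degreeBelow p
  have descend : ∀ k, DegreeBelow (k + 2) p → DegreeBelow 2 p := fun k => by
    induction k with
    | zero => exact id
    | succ k ih =>
      refine fun hp => ih (hp.of_eval_lapl_pow_mul_self_eq_zero ?_)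
      rw [pow_add, Module.End.mul_apply, sq, Module.End.mul_apply, h, map_zero, map_zero]
  match k, hk with
  | 0, hk => rw [show p = 0 from hk]; exact .zero 2
  | 1, hk => exact fun i => by rw [show pderiv i p = 0 from hk i]; exact .zero 1
  | k + 2, hk => exact descend k hk

section Affine

variable {p q : MvPolynomial σ ℝ} {a b : σ → ℝ}

theorem lapl_eq_zero_of_pderiv_eq_C (hp : ∀ i, pderiv i p = C (a i)) : lapl p = 0 := by
  simp [lapl_apply, hp]

theorem lapl_mul_of_pderiv_eq_C (hp : ∀ i, pderiv i p = C (a i))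
    (hq : ∀ i, pderiv i q = C (b i)) : lapl (p * q) = C (2 * ∑ i, a i * b i) := by
  rw [lapl_mul, lapl_eq_zero_of_pderiv_eq_C hp, lapl_eq_zero_of_pderiv_eq_C hq]
  simp [hp, hq, smul_eq_C_mul]

theorem lapl_lapl_cube_mul (hp : ∀ i, pderiv i p = C (a i)) (hq : ∀ i, pderiv i q = C (b i)) :
    lapl (lapl (p ^ 3 * q)) = C (24 * ((∑ i, a i * a i) * ∑ i, a i * b i)) := by
  have h : lapl (p ^ 3 * q) =
      (6 * ∑ i, a i * a i) • (p * q) + (6 * ∑ i, a i * b i) • (p * p) := by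
    rw [show p ^ 3 * q = (p * p) * (p * q) by ring, lapl_mul, lapl_mul_of_pderiv_eq_C hp hp,
      lapl_mul_of_pderiv_eq_C hp hq]
    have : ∀ i, pderiv i (p * p) * pderiv i (p * q) =
        C (a i * a i) * (2 * p * q) + C (a i * b i) * (2 * p * p) := fun i => by
      simp only [pderiv_mul, hp, hq, C_mul]
      ring
    simp only [this, Finset.sum_add_distrib, ← Finset.sum_mul, ← map_sum]
    simp only [smul_eq_C_mul, C_mul,
      show (C 2 : MvPolynomial σ ℝ) = 2 from map_ofNat C 2,
      show (C 6 : MvPolynomial σ ℝ) = 6 from map_ofNat C 6]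
    ring
  rw [h, map_add, map_smul, map_smul, lapl_mul_of_pderiv_eq_C hp hp, lapl_mul_of_pderiv_eq_C hp hq,
    smul_eq_C_mul, smul_eq_C_mul, ← C_mul, ← C_mul, ← C_add]
  congr 1
  ring

theorem lapl_lapl_pow_four (hp : ∀ i, pderiv i p = C (a i)) :
    lapl (lapl (p ^ 4)) = C (24 * ((∑ i, a i * a i) * ∑ i, a i * a i)) := by
  rw [← lapl_lapl_cube_mul hp hp, ← pow_succ]

end Affine

end MvPolynomial

open MvPolynomial

theorem hasFDerivAt_eval_single {m : ℕ} (p : MvPolynomial (Fin m) ℝ)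
    (x : EuclideanSpace ℝ (Fin m)) :
    ∃ L : EuclideanSpace ℝ (Fin m) →L[ℝ] ℝ,
      HasFDerivAt (fun y : EuclideanSpace ℝ (Fin m) => eval (fun j => y j) p) L x ∧
      ∀ i, L (EuclideanSpace.single i 1) = eval (fun j => x j) (pderiv i p) := by
  induction p using MvPolynomial.induction_on with
  | C a => exact ⟨0, by simpa using hasFDerivAt_const a x, by simp⟩
  | add p q hp hq =>
    obtain ⟨L, hL, hL'⟩ := hp
    obtain ⟨M, hM, hM'⟩ := hq
    exact ⟨L + M, by simpa using hL.fun_add hM, fun i => by simp [hL', hM']⟩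
  | mul_X p k hp =>
    obtain ⟨L, hL, hL'⟩ := hp
    have hX : HasFDerivAt (fun y : EuclideanSpace ℝ (Fin m) => y k)
        (EuclideanSpace.proj k : EuclideanSpace ℝ (Fin m) →L[ℝ] ℝ) x :=
      (EuclideanSpace.proj k : EuclideanSpace ℝ (Fin m) →L[ℝ] ℝ).hasFDerivAt
    refine ⟨_, by simpa using hL.fun_mul hX, fun i => ?_⟩
    by_cases h : i = k
    · subst h
      simp [hL', mul_comm]
    · simp [hL', mul_comm, Ne.symm h]

theorem laplacian_eval {m : ℕ} (p : MvPolynomial (Fin m) ℝ) :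
    laplacian (fun x : EuclideanSpace ℝ (Fin m) => eval (fun j => x j) p) =
      fun x => eval (fun j => x j) (lapl p) := by
  have h (q : MvPolynomial (Fin m) ℝ) (i : Fin m) (x : EuclideanSpace ℝ (Fin m)) :
      fderiv ℝ (fun y : EuclideanSpace ℝ (Fin m) => eval (fun j => y j) q) x
        (EuclideanSpace.single i 1) = eval (fun j => x j) (pderiv i q) := by
    obtain ⟨L, hL, hL'⟩ := hasFDerivAt_eval_single q x
    rw [hL.fderiv, hL']
  funext x
  simp only [laplacian, h, lapl_apply, map_sum]

theorem contDiff_eval {m : ℕ} (p : MvPolynomial (Fin m) ℝ) :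
    ContDiff ℝ (⊤ : ℕ∞) (fun x : EuclideanSpace ℝ (Fin m) => eval (fun j => x j) p) := by
  induction p using MvPolynomial.induction_on with
  | C a => simpa using contDiff_const
  | add p q hp hq => simpa using hp.add hq
  | mul_X p k hp =>
    simpa using hp.mul (EuclideanSpace.proj k : EuclideanSpace ℝ (Fin m) →L[ℝ] ℝ).contDiff

theorem eq_zero_of_eval_euclidean_eq_zero {m : ℕ} {p : MvPolynomial (Fin m) ℝ}
    (h : ∀ x : EuclideanSpace ℝ (Fin m), eval (fun j => x j) p = 0) : p = 0 :=
  MvPolynomial.funext fun x => by simpa using h (WithLp.toLp 2 x)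

/-- A matrix with orthonormal rows defines a co-isometry. -/
theorem toEuclideanLin_comp_adjoint_eq_id {m n : ℕ} {M : Matrix (Fin n) (Fin m) ℝ}
    (hM : M * M.transpose = 1) :
    (Matrix.toEuclideanLin M).toContinuousLinearMap.comp
      (ContinuousLinearMap.adjoint (Matrix.toEuclideanLin M).toContinuousLinearMap) =
      ContinuousLinearMap.id ℝ (EuclideanSpace ℝ (Fin n)) := by
  rw [← LinearMap.adjoint_toContinuousLinearMap, ← Matrix.toEuclideanLin_conjTranspose_eq_adjoint]
  ext x i
  simp [Matrix.conjTranspose_eq_transpose_of_trivial, hM]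

/-- A non-constant polynomial biharmonic morphism `φ : ℝᵐ → ℝⁿ`, `m > n ≥ 2`,
is an orthogonal projection followed by a homothety. -/
theorem polynomial_biharmonic_morphism_classification
    (m n : ℕ) (hn : 2 ≤ n) (hmn : n < m)
    (φ : EuclideanSpace ℝ (Fin m) → EuclideanSpace ℝ (Fin n))
    (hpoly : ∀ i : Fin n, ∃ p : MvPolynomial (Fin m) ℝ,
      ∀ x, φ x i = MvPolynomial.eval (fun j => x j) p)
    (hnonconst : ∃ x y, φ x ≠ φ y)
    (hmorphism : ∀ U : Set (EuclideanSpace ℝ (Fin n)), IsOpen U →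
      ∀ f : EuclideanSpace ℝ (Fin n) → ℝ, ContDiffOn ℝ (⊤ : ℕ∞) f U →
        (∀ y ∈ U, laplacian (laplacian f) y = 0) →
        ∀ x ∈ φ ⁻¹' U, laplacian (laplacian (f ∘ φ)) x = 0) :
    ∃ (lam : ℝ) (b : EuclideanSpace ℝ (Fin n))
      (A : EuclideanSpace ℝ (Fin m) →L[ℝ] EuclideanSpace ℝ (Fin n)),
      0 < lam ∧
      A.comp (ContinuousLinearMap.adjoint A)
          = ContinuousLinearMap.id ℝ (EuclideanSpace ℝ (Fin n)) ∧
      ∀ x, φ x = lam • A x + b := by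
  choose p hp using hpoly
  have pull (Q : MvPolynomial (Fin n) ℝ) (hQ : lapl (lapl Q) = 0) :
      lapl (lapl (bind₁ p Q)) = 0 := by
    refine eq_zero_of_eval_euclidean_eq_zero fun x => ?_
    have h := hmorphism Set.univ isOpen_univ (fun y => eval (fun j => y j) Q)
      (contDiff_eval Q).contDiffOn (fun y _ => by simp [laplacian_eval, hQ]) x trivial
    have hcomp : (fun y : EuclideanSpace ℝ (Fin n) => eval (fun j => y j) Q) ∘ φ =
        fun x => eval (fun j => x j) (bind₁ p Q) := by
      funext x
      simp only [Function.comp_apply, hp]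
      rw [← aeval_eq_eval, ← aeval_eq_eval, aeval_bind₁]
    rwa [hcomp, laplacian_eval, laplacian_eval] at h
  have hX (i : Fin n) (k : Fin n) :
      pderiv k (X i : MvPolynomial (Fin n) ℝ) = C (if i = k then 1 else 0) := by
    rw [pderiv_X, Pi.single_apply]
    split_ifs <;> simp
  have haffine (i : Fin n) : ∃ (a : Fin m → ℝ) (b : ℝ), p i = ∑ j, C (a j) * X j + C b := by
    refine (degreeBelow_two_of_lapl_lapl_mul_self_eq_zero ?_).exists_affine
    have h := pull (X i * X i) (by
      rw [lapl_mul_of_pderiv_eq_C (hX i) (hX i)]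
      exact lapl_eq_zero_of_pderiv_eq_C (a := 0) (by simp))
    simpa using h
  choose a b hab using haffine
  have hpd (i : Fin n) (k : Fin m) : pderiv k (p i) = C (a i k) := by
    rw [hab, map_add, map_sum]
    simp [pderiv_X, Pi.single_apply]
  have hcube {i j : Fin n} (hij : i ≠ j) : (∑ k, a i k * a i k) * ∑ k, a i k * a j k = 0 := by
    have h := pull (X i ^ 3 * X j) (by
      rw [lapl_lapl_cube_mul (hX i) (hX j)]
      simp [hij])
    rw [map_mul, map_pow, bind₁_X_right, bind₁_X_right, lapl_lapl_cube_mul (hpd i) (hpd j),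
      map_eq_zero_iff C (C_injective _ _)] at h
    linarith
  have hnorm (i j : Fin n) : ∑ k, a i k * a i k = ∑ k, a j k * a j k := by
    have h := pull (X i ^ 4 - X j ^ 4) (by
      rw [map_sub, map_sub, lapl_lapl_pow_four (hX i), lapl_lapl_pow_four (hX j)]
      simp)
    rw [map_sub, map_pow, map_pow, bind₁_X_right, bind₁_X_right, map_sub, map_sub,
      lapl_lapl_pow_four (hpd i), lapl_lapl_pow_four (hpd j), sub_eq_zero] at h
    have h' := C_injective _ _ h
    refine (mul_self_inj (Finset.sum_nonneg fun k _ => mul_self_nonneg _)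
      (Finset.sum_nonneg fun k _ => mul_self_nonneg _)).mp ?_
    linarith
  let i₀ : Fin n := ⟨0, by omega⟩
  set s : ℝ := ∑ k, a i₀ k * a i₀ k with hs
  have hφ (x : EuclideanSpace ℝ (Fin m)) (i : Fin n) : φ x i = ∑ k, a i k * x k + b i := by
    simp [hp, hab]
  have hs_pos : 0 < s := by
    refine lt_of_le_of_ne (Finset.sum_nonneg fun k _ => mul_self_nonneg _) fun h0 => ?_
    obtain ⟨x, y, hxy⟩ := hnonconst
    refine hxy (PiLp.ext fun i => ?_)
    have hi : ∀ k, a i k = 0 := fun k => by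
      have := (Finset.sum_eq_zero_iff_of_nonneg fun k _ => mul_self_nonneg (a i k)).mp
        ((hnorm i i₀).trans h0.symm) k (Finset.mem_univ k)
      exact mul_self_eq_zero.mp this
    simp [hφ, hi]
  have hsq : √s * √s = s := Real.mul_self_sqrt hs_pos.le
  have hsqrt : 0 < √s := Real.sqrt_pos.mpr hs_pos
  let M : Matrix (Fin n) (Fin m) ℝ := Matrix.of fun i k => (√s)⁻¹ * a i k
  have hM : M * M.transpose = 1 := by
    ext i j
    have hsum : (M * M.transpose) i j = s⁻¹ * ∑ k, a i k * a j k := by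
      rw [Matrix.mul_apply, Finset.mul_sum, ← hsq, mul_inv]
      exact Finset.sum_congr rfl fun k _ => by simp [M]; ring
    rw [hsum, Matrix.one_apply]
    split_ifs with h
    · rw [← h, hnorm i i₀, inv_mul_cancel₀ hs_pos.ne']
    · have := hcube h
      rw [hnorm i i₀] at this
      rw [(mul_eq_zero.mp this).resolve_left hs_pos.ne', mul_zero]
  refine ⟨√s, WithLp.toLp 2 b, (Matrix.toEuclideanLin M).toContinuousLinearMap, hsqrt,
    toEuclideanLin_comp_adjoint_eq_id hM, fun x => PiLp.ext fun i => ?_⟩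
  have hMx : (Matrix.toEuclideanLin M x) i = (√s)⁻¹ * ∑ k, a i k * x k := by
    simp [Matrix.toLpLin_apply, Matrix.mulVec, dotProduct, M, Finset.mul_sum, mul_assoc]
  rw [hφ]
  simp [hMx, hsqrt.ne']
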